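/- Let t₂ ≥ t₁ ≥ 2, Q ≥ 1, R ≥ 0 be integers. Then A_{t₁}(Q, 2R+1) ≥ (t₁/t₂)^Q · A_{t₂}(Q, 2R+1), where A_t(Q,d) is the maximum number of codewords in a code of length Q over an alphabet of size t with minimum Hamming distance d. -/

import Mathlib

/-- `A t Q d`: the maximum number of codewords in a code of length `Q` over an
alphabet of size `t` with minimum Hamming distance `d`. -/
noncomputable def maxCode (t Q d : ℕ) : ℕ :=
  sSup {n : ℕ | ∃ s : Finset (Fin Q → Fin t),
    (∀ x ∈ s, ∀ y ∈ s, x ≠ y → d ≤ hammingDist x y) ∧ s.card = n}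

theorem maxCode_bdd (t Q d : ℕ) : BddAbove {n : ℕ | ∃ s : Finset (Fin Q → Fin t),
    (∀ x ∈ s, ∀ y ∈ s, x ≠ y → d ≤ hammingDist x y) ∧ s.card = n} := by
  refine ⟨Fintype.card (Fin Q → Fin t), ?_⟩
  rintro n ⟨s, -, rfl⟩
  exact Finset.card_le_univ s

theorem alphabet_change_nat (t₁ t₂ Q d : ℕ) (h1 : 2 ≤ t₁) (h2 : t₁ ≤ t₂) :
    t₁ ^ Q * maxCode t₂ Q d ≤ t₂ ^ Q * maxCode t₁ Q d := by
  classical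
  haveI : NeZero t₂ := ⟨by omega⟩
  obtain ⟨s, hs, hcard⟩ : ∃ s : Finset (Fin Q → Fin t₂),
      (∀ x ∈ s, ∀ y ∈ s, x ≠ y → d ≤ hammingDist x y) ∧ s.card = maxCode t₂ Q d :=
    Nat.sSup_mem (s := {n : ℕ | ∃ s : Finset (Fin Q → Fin t₂),
      (∀ x ∈ s, ∀ y ∈ s, x ≠ y → d ≤ hammingDist x y) ∧ s.card = n})
      ⟨0, ∅, by simp, by simp⟩ (maxCode_bdd t₂ Q d)
  let f : (Fin Q → Fin t₁) → (Fin Q → Fin t₂) := fun a i => Fin.castLE h2 (a i)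
  have hf : ∀ (a b : Fin Q → Fin t₁) (g : Fin Q → Fin t₂),
      hammingDist (f a + g) (f b + g) = hammingDist a b := by
    intro a b g
    simp [hammingDist, f]
  have hT : ∀ g : Fin Q → Fin t₂,
      (Finset.univ.filter fun a => f a + g ∈ s).card ≤ maxCode t₁ Q d := by
    intro g
    refine le_csSup (maxCode_bdd t₁ Q d) ⟨_, ?_, rfl⟩
    intro x hx y hy hxy
    rw [← hf x y g]
    refine hs _ (by simpa using hx) _ (by simpa using hy) ?_
    intro h
    apply hxy
    rw [← hammingDist_eq_zero, ← hf x y g, h, hammingDist_self]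
  have hS : ∀ a : Fin Q → Fin t₁,
      (Finset.univ.filter fun g => f a + g ∈ s).card = s.card := by
    intro a
    refine Finset.card_bij (fun g _ => f a + g) ?_ ?_ ?_
    · intro g hg
      simpa using hg
    · intro g _ g' _ h
      exact add_left_cancel h
    · intro b hb
      exact ⟨-f a + b, by simpa using hb, by simp⟩
  calc t₁ ^ Q * maxCode t₂ Q d
      = ∑ a : Fin Q → Fin t₁, (Finset.univ.filter fun g => f a + g ∈ s).card := by
        simp [hS, hcard]
    _ = ∑ g : Fin Q → Fin t₂, (Finset.univ.filter fun a => f a + g ∈ s).card := by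
        simp only [Finset.card_filter]
        exact Finset.sum_comm
    _ ≤ ∑ _g : Fin Q → Fin t₂, maxCode t₁ Q d := Finset.sum_le_sum fun g _ => hT g
    _ = t₂ ^ Q * maxCode t₁ Q d := by simp

/-- `A_{t₁}(Q, 2R+1) ≥ (t₁/t₂)^Q · A_{t₂}(Q, 2R+1)`. -/
theorem alphabet_change (t₁ t₂ Q R : ℕ) (h1 : 2 ≤ t₁) (h2 : t₁ ≤ t₂) (hQ : 1 ≤ Q) :
    ((t₁ : ℝ) / t₂) ^ Q * (maxCode t₂ Q (2 * R + 1) : ℝ)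
      ≤ (maxCode t₁ Q (2 * R + 1) : ℝ) := by
  have h := alphabet_change_nat t₁ t₂ Q (2 * R + 1) h1 h2
  have hpos : (0 : ℝ) < (t₂ : ℝ) ^ Q := by
    have : 0 < t₂ := by omega
    positivity
  rw [div_pow, div_mul_eq_mul_div, div_le_iff₀ hpos, mul_comm (maxCode t₁ Q _ : ℝ)]
  exact_mod_cast h
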